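/- Let G be a cubic graph containing a contractible triangle T, and let H = G/T be the cubic graph obtained by contracting T to a single vertex v_T. Suppose g: E(H) → E(S) is a map with v_T ∈ V(g), and s ∈ V(S) satisfies g(∂_H(v_T)) = ∂_S(s). Then g extends to a map f: E(G) → E(S) (agreeing with g on E(G)∩E(H), i.e., on edges not in T) with V(f) ⊇ (V(g)\{v_T}) ∪ V(T), by coloring each edge of T with the color from ∂_S(s) not appearing on the two edges incident to its endpoints. -/

import Mathlib

open scoped Classical

/-- A finite undirected multigraph (possibly with loops and parallel edges),
given by a vertex type, an edge type, and an endpoints map. -/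
structure Multigraph where
  V : Type
  E : Type
  [fintV : Fintype V]
  [fintE : Fintype E]
  [decV : DecidableEq V]
  [decE : DecidableEq E]
  ends : E → Sym2 V

namespace Multigraph

attribute [instance] Multigraph.fintV Multigraph.fintE Multigraph.decV Multigraph.decE

variable (G : Multigraph)

/-- The number of times `v` occurs as an endpoint of `e` (2 for a loop at `v`). -/
def incCount (v : G.V) (e : G.E) : ℕ :=
  if G.ends e = Sym2.diag v then 2 else if v ∈ G.ends e then 1 else 0

/-- Degree of a vertex (a loop contributes 2). -/
def degree (v : G.V) : ℕ := ∑ e : G.E, G.incCount v e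

/-- The set `∂_G(v)` of edges incident to `v`. -/
def star (v : G.V) : Finset G.E := Finset.univ.filter fun e => v ∈ G.ends e

/-- No loops. -/
def Loopless : Prop := ∀ e : G.E, ¬ (G.ends e).IsDiag

/-- A cubic graph: loopless and 3-regular (parallel edges allowed). -/
def Cubic : Prop := G.Loopless ∧ ∀ v : G.V, G.degree v = 3

/-- A cubic pseudo-graph: 3-regular, loops and parallel edges allowed. -/
def CubicPseudo : Prop := ∀ v : G.V, G.degree v = 3

/-- A simple graph: no loops and no parallel edges. -/
def Simple : Prop := G.Loopless ∧ ∀ e e' : G.E, G.ends e = G.ends e' → e = e'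

/-- Two edges are adjacent if they are distinct and share an endpoint. -/
def EdgeAdj (e e' : G.E) : Prop :=
  e ≠ e' ∧ ∃ v : G.V, v ∈ G.ends e ∧ v ∈ G.ends e'

/-- A matching: a set of pairwise non-adjacent edges. -/
def IsMatching (M : Set G.E) : Prop :=
  ∀ e ∈ M, ∀ e' ∈ M, e ≠ e' → ¬ ∃ v : G.V, v ∈ G.ends e ∧ v ∈ G.ends e'

/-- A perfect matching: a matching covering every vertex. -/
def IsPerfectMatching (M : Set G.E) : Prop :=
  G.IsMatching M ∧ ∀ v : G.V, ∃ e ∈ M, v ∈ G.ends e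

/-- Degree of `v` within the spanning subgraph with edge set `A`. -/
noncomputable def degIn (A : Set G.E) (v : G.V) : ℕ :=
  ∑ e : G.E, if e ∈ A then G.incCount v e else 0

/-- `A` is the edge set of a `k`-factor: a spanning `k`-regular subgraph. -/
def IsKFactor (k : ℕ) (A : Set G.E) : Prop := ∀ v : G.V, G.degIn A v = k

/-- `A` is the edge set of an even subgraph. -/
def EvenSubgraph (A : Set G.E) : Prop := ∀ v : G.V, Even (G.degIn A v)

/-- Reachability using only edges from `A`. -/
def Reach (A : Set G.E) : G.V → G.V → Prop :=
  Relation.ReflTransGen fun a b => ∃ e ∈ A, G.ends e = s(a, b)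

/-- Connectedness. -/
def Connected : Prop := ∀ u v : G.V, G.Reach Set.univ u v

/-- A bridge: an edge whose removal disconnects its endpoints. -/
def IsBridge (e : G.E) : Prop :=
  ∀ u w : G.V, G.ends e = s(u, w) → ¬ G.Reach {e' | e' ≠ e} u w

/-- The chromatic index: least number of colors of a proper edge coloring. -/
noncomputable def chromaticIndex : ℕ :=
  sInf {n | ∃ c : G.E → Fin n, ∀ e e', G.EdgeAdj e e' → c e ≠ c e'}

/-- A triangle on distinct vertices `u, v, w` with edges `e₁, e₂, e₃`. -/
def IsTriangle (e₁ e₂ e₃ : G.E) (u v w : G.V) : Prop :=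
  u ≠ v ∧ v ≠ w ∧ u ≠ w ∧
    G.ends e₁ = s(u, v) ∧ G.ends e₂ = s(v, w) ∧ G.ends e₃ = s(u, w)

/-- Triangle-freeness. -/
def TriangleFree : Prop :=
  ¬ ∃ (e₁ e₂ e₃ : G.E) (u v w : G.V), G.IsTriangle e₁ e₂ e₃ u v w

/-- An isomorphism of multigraphs. -/
structure Iso (G H : Multigraph) where
  vEquiv : G.V ≃ H.V
  eEquiv : G.E ≃ H.E
  ends_map : ∀ e : G.E, H.ends (eEquiv e) = (G.ends e).map vEquiv

/-- `G` and `H` are isomorphic. -/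
def IsIsomorphicTo (G H : Multigraph) : Prop := Nonempty (Iso G H)

/-- An `H`-coloring of `G`: `f(∂_G(x)) = ∂_H(y)` for every vertex `x` of `G`,
some vertex `y` of `H`. -/
def IsHColoring (G H : Multigraph) (f : G.E → H.E) : Prop :=
  ∀ x : G.V, ∃ y : H.V, (G.star x).image f = H.star y

/-- The set `V(f)` of vertices of `G` satisfying the `H`-coloring condition under `f`. -/
def colVerts (G H : Multigraph) (f : G.E → H.E) : Set G.V :=
  {x : G.V | ∃ y : H.V, (G.star x).image f = H.star y}

/-- The incidence multiset of a vertex: each incident edge with its multiplicity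
(a loop occurs twice). -/
noncomputable def incMultiset (v : G.V) : Multiset G.E :=
  ∑ e : G.E, (G.incCount v e) • ({e} : Multiset G.E)

end Multigraph

/-- The Petersen graph. -/
def Petersen : Multigraph where
  V := Fin 10
  E := {p : Sym2 (Fin 10) //
    p ∈ ({s(0,1), s(1,2), s(2,3), s(3,4), s(4,0),
          s(0,5), s(1,6), s(2,7), s(3,8), s(4,9),
          s(5,7), s(7,9), s(9,6), s(6,8), s(8,5)} : Finset (Sym2 (Fin 10)))}
  ends := Subtype.val

/-- The Sylvester graph `S` on 10 vertices: a central vertex 0 joined by three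
bridges to three end-blocks; each end-block is a 3-vertex multigraph whose two
non-root vertices are joined by a pair of parallel edges. -/
def SylvesterS : Multigraph where
  V := Fin 10
  E := Fin 15
  ends := ![s(0,1), s(1,2), s(1,3), s(2,3), s(2,3),
            s(0,4), s(4,5), s(4,6), s(5,6), s(5,6),
            s(0,7), s(7,8), s(7,9), s(8,9), s(8,9)]

/-- The Sylvester simple graph `S₁₆` on 16 vertices: central vertex 0 joined by
bridges to three 5-vertex end-blocks with edges
(v1,v2),(v1,v3),(v1,v4),(v2,v3),(v2,v4),(v3,v5),(v4,v5). -/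
def Sylvester16 : Multigraph where
  V := Fin 16
  E := {p : Sym2 (Fin 16) //
    p ∈ ({s(1,2), s(1,3), s(1,4), s(2,3), s(2,4), s(3,5), s(4,5), s(0,5),
          s(6,7), s(6,8), s(6,9), s(7,8), s(7,9), s(8,10), s(9,10), s(0,10),
          s(11,12), s(11,13), s(11,14), s(12,13), s(12,14), s(13,15), s(14,15),
          s(0,15)} : Finset (Sym2 (Fin 16)))}
  ends := Subtype.val

/-- The graph `S'` on 10 vertices: two 5-vertex blocks, each consisting of a
triangle v1v2v3 together with edges (v1,v4),(v2,v4),(v3,v5),(v4,v5), joined by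
a bridge between the two degree-2 vertices. -/
def Sprime : Multigraph where
  V := Fin 10
  E := {p : Sym2 (Fin 10) //
    p ∈ ({s(0,1), s(0,2), s(1,2), s(0,3), s(1,3), s(2,4), s(3,4),
          s(5,6), s(5,7), s(6,7), s(5,8), s(6,8), s(7,9), s(8,9),
          s(4,9)} : Finset (Sym2 (Fin 10)))}
  ends := Subtype.val

/-- The Sylvester pseudo-graph `S₄` on 4 vertices: a central vertex 0 joined to
vertices 1, 2, 3 (edges `a = 0`, `b = 1`, `c = 2`), each of which carries a loop
(`a' = 3`, `b' = 4`, `c' = 5`). -/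
def S4 : Multigraph where
  V := Fin 4
  E := Fin 6
  ends := ![s(0,1), s(0,2), s(0,3), s(1,1), s(2,2), s(3,3)]


/-- The multigraph obtained from `G` by contracting the triangle on vertices
`u, v, w` (with edges `t₁, t₂, t₃`) onto the vertex `u`. -/
def Multigraph.contractTriangle (G : Multigraph) (u v w : G.V) (t₁ t₂ t₃ : G.E)
    (huv : u ≠ v) (huw : u ≠ w) : Multigraph where
  V := {x : G.V // x ≠ v ∧ x ≠ w}
  E := {e : G.E // e ≠ t₁ ∧ e ≠ t₂ ∧ e ≠ t₃}
  ends := fun e => (G.ends e.val).map fun x =>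
    if h : x = v ∨ x = w then ⟨u, huv, huw⟩ else ⟨x, by tauto⟩

/-!
Each of `u`, `v`, `w` has exactly one edge off the triangle; call these edges `a`, `b`, `c`. They
are the edges at the contracted vertex, where they carry all the colours `g a`, `g b`, `g c`. Giving
every triangle edge the colour of the edge leaving the opposite vertex makes each of `u`, `v`, `w`
see exactly these colours, and no other vertex meets the triangle.
-/

namespace Multigraph

section Degree

variable {G : Multigraph} {x y : G.V} {e t t' : G.E}

theorem mem_star : e ∈ G.star x ↔ x ∈ G.ends e := by
  simp only [star, Finset.mem_filter, Finset.mem_univ, true_and]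

theorem incCount_ne_zero_iff : G.incCount x e ≠ 0 ↔ e ∈ G.star x := by
  rw [mem_star, incCount]
  split_ifs with hloop hmem
  · simp [hloop, Sym2.diag]
  · simp [hmem]
  · simp [hmem]

theorem incCount_eq_one_of_ends_eq (he : G.ends e = s(x, y)) (hxy : x ≠ y) :
    G.incCount x e = 1 := by
  simp [incCount, he, Sym2.diag, hxy.symm]

theorem exists_star_eq_of_degree_eq_three (hx : G.degree x = 3) (htt' : t ≠ t')
    (ht : G.incCount x t = 1) (ht' : G.incCount x t' = 1) :
    ∃ a, a ≠ t ∧ a ≠ t' ∧ G.star x = {a, t, t'} := by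
  have hrest : ∑ e ∈ Finset.univ \ {t, t'}, G.incCount x e = 1 := by
    have hsplit := Finset.sum_sdiff (f := G.incCount x) (Finset.subset_univ {t, t'})
    rw [Finset.sum_pair htt', ht, ht', ← degree, hx] at hsplit
    lia
  obtain ⟨a, ha, ha_ne_zero⟩ := Finset.exists_ne_zero_of_sum_ne_zero (hrest ▸ one_ne_zero)
  have hzero : ∑ e ∈ (Finset.univ \ {t, t'}).erase a, G.incCount x e = 0 := by
    have hsplit := Finset.add_sum_erase _ (G.incCount x) ha
    lia
  rw [Finset.sum_eq_zero_iff] at hzero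
  simp only [Finset.mem_sdiff, Finset.mem_univ, Finset.mem_insert, Finset.mem_singleton, true_and,
    not_or, Finset.mem_erase] at ha hzero
  refine ⟨a, ha.1, ha.2, Finset.ext fun e => ?_⟩
  rw [← incCount_ne_zero_iff]
  grind

end Degree

section Triangle

variable {G : Multigraph} {u v w : G.V} {t₁ t₂ t₃ : G.E}

theorem IsTriangle.rotate (hT : G.IsTriangle t₁ t₂ t₃ u v w) : G.IsTriangle t₂ t₃ t₁ v w u := by
  obtain ⟨huv, hvw, huw, h₁, h₂, h₃⟩ := hT
  exact ⟨hvw, huw.symm, huv.symm, h₂, h₃.trans Sym2.eq_swap, h₁.trans Sym2.eq_swap⟩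

theorem IsTriangle.notMem_ends_opposite (hT : G.IsTriangle t₁ t₂ t₃ u v w) : u ∉ G.ends t₂ := by
  obtain ⟨huv, -, huw, -, h₂, -⟩ := hT
  simp [h₂, huv, huw]

theorem IsTriangle.edge_ne (hT : G.IsTriangle t₁ t₂ t₃ u v w) : t₁ ≠ t₂ := by
  rintro rfl
  exact hT.notMem_ends_opposite (hT.2.2.2.1 ▸ Sym2.mem_mk_left u v)

theorem IsTriangle.exists_star_eq (hT : G.IsTriangle t₁ t₂ t₃ u v w) (hu : G.degree u = 3) :
    ∃ a, (a ≠ t₁ ∧ a ≠ t₂ ∧ a ≠ t₃) ∧ G.star u = {a, t₃, t₁} := by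
  have ⟨huv, _, huw, h₁, _, h₃⟩ := hT
  obtain ⟨a, ha₃, ha₁, hstar⟩ := exists_star_eq_of_degree_eq_three hu hT.rotate.rotate.edge_ne
    (incCount_eq_one_of_ends_eq h₃ huw) (incCount_eq_one_of_ends_eq h₁ huv)
  have hua : u ∈ G.ends a := mem_star.1 (hstar ▸ Finset.mem_insert_self a _)
  have ha₂ : a ≠ t₂ := fun h => hT.notMem_ends_opposite (h ▸ hua)
  exact ⟨a, ⟨ha₁, ha₂, ha₃⟩, hstar⟩

end Triangle

section Contraction

variable {G : Multigraph} {u v w : G.V} {t₁ t₂ t₃ : G.E} {huv : u ≠ v} {huw : u ≠ w}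

/-- The vertex `v_T` of `G/T` onto which the triangle is contracted; `contractTriangle` represents
it by `u`. -/
def contractedVertex : (G.contractTriangle u v w t₁ t₂ t₃ huv huw).V := ⟨u, huv, huw⟩

theorem mem_star_contractedVertex {e : (G.contractTriangle u v w t₁ t₂ t₃ huv huw).E} :
    e ∈ (G.contractTriangle u v w t₁ t₂ t₃ huv huw).star contractedVertex ↔
      e.val ∈ G.star u ∨ e.val ∈ G.star v ∨ e.val ∈ G.star w := by
  simp only [mem_star]
  refine Sym2.mem_map.trans ⟨?_, ?_⟩
  · rintro ⟨y, hy, hyu⟩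
    split_ifs at hyu with hyvw
    · rcases hyvw with rfl | rfl
      exacts [.inr (.inl hy), .inr (.inr hy)]
    · obtain rfl : y = u := congrArg Subtype.val hyu
      exact .inl hy
  · rintro (hu | hv | hw)
    exacts [⟨u, hu, dif_neg (not_or.2 ⟨huv, huw⟩)⟩, ⟨v, hv, dif_pos (.inl rfl)⟩,
      ⟨w, hw, dif_pos (.inr rfl)⟩]

theorem mem_star_contractTriangle_of_ne {x : (G.contractTriangle u v w t₁ t₂ t₃ huv huw).V}
    (hx : x ≠ contractedVertex) {e : (G.contractTriangle u v w t₁ t₂ t₃ huv huw).E} :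
    e ∈ (G.contractTriangle u v w t₁ t₂ t₃ huv huw).star x ↔ e.val ∈ G.star x.val := by
  simp only [mem_star]
  refine Sym2.mem_map.trans ⟨?_, fun h => ⟨x.val, h, dif_neg (not_or.2 x.2)⟩⟩
  rintro ⟨y, hy, hyx⟩
  split_ifs at hyx with hyvw
  · exact absurd hyx.symm hx
  · exact hyx ▸ hy

theorem IsTriangle.image_val_star_contractTriangle_of_ne (hT : G.IsTriangle t₁ t₂ t₃ u v w)
    {x : (G.contractTriangle u v w t₁ t₂ t₃ huv huw).V} (hx : x ≠ contractedVertex) :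
    ((G.contractTriangle u v w t₁ t₂ t₃ huv huw).star x).image (fun e => e.val) =
      G.star x.val := by
  obtain ⟨-, -, -, h₁, h₂, h₃⟩ := hT
  have hxu : x.val ≠ u := fun h => hx (Subtype.ext h)
  have off_triangle {e : G.E} (he : e ∈ G.star x.val) : e ≠ t₁ ∧ e ≠ t₂ ∧ e ≠ t₃ := by
    rw [mem_star] at he
    refine ⟨?_, ?_, ?_⟩ <;> rintro rfl
    · simp [h₁, hxu, x.2.1] at he
    · simp [h₂, x.2.1, x.2.2] at he
    · simp [h₃, hxu, x.2.2] at he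
  ext e
  rw [Finset.mem_image]
  constructor
  · rintro ⟨e, he, rfl⟩
    exact (mem_star_contractTriangle_of_ne hx).1 he
  · exact fun he => ⟨⟨e, off_triangle he⟩, (mem_star_contractTriangle_of_ne hx).2 he, rfl⟩

theorem IsTriangle.exists_stars_eq (hT : G.IsTriangle t₁ t₂ t₃ u v w)
    (hu : G.degree u = 3) (hv : G.degree v = 3) (hw : G.degree w = 3) :
    ∃ a b c : (G.contractTriangle u v w t₁ t₂ t₃ huv huw).E, G.star u = {a.val, t₃, t₁} ∧
      G.star v = {b.val, t₁, t₂} ∧ G.star w = {c.val, t₂, t₃} := by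
  obtain ⟨a, ha, hstar_u⟩ := hT.exists_star_eq hu
  obtain ⟨b, ⟨hb₂, hb₃, hb₁⟩, hstar_v⟩ := hT.rotate.exists_star_eq hv
  obtain ⟨c, ⟨hc₃, hc₁, hc₂⟩, hstar_w⟩ := hT.rotate.rotate.exists_star_eq hw
  exact ⟨⟨a, ha⟩, ⟨b, hb₁, hb₂, hb₃⟩, ⟨c, hc₁, hc₂, hc₃⟩, hstar_u, hstar_v, hstar_w⟩

theorem star_contractedVertex {a b c : (G.contractTriangle u v w t₁ t₂ t₃ huv huw).E}
    (hu : G.star u = {a.val, t₃, t₁}) (hv : G.star v = {b.val, t₁, t₂})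
    (hw : G.star w = {c.val, t₂, t₃}) :
    (G.contractTriangle u v w t₁ t₂ t₃ huv huw).star contractedVertex = {a, b, c} := by
  ext e
  obtain ⟨he₁, he₂, he₃⟩ := e.2
  have val_eq_iff (e' : (G.contractTriangle u v w t₁ t₂ t₃ huv huw).E) : e.val = e'.val ↔ e = e' :=
    Subtype.ext_iff.symm
  simp [mem_star_contractedVertex, hu, hv, hw, he₁, he₂, he₃, val_eq_iff]

theorem IsTriangle.exists_extension {α : Type*} (hT : G.IsTriangle t₁ t₂ t₃ u v w)
    (g : (G.contractTriangle u v w t₁ t₂ t₃ huv huw).E → α) (k₁ k₂ k₃ : α) :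
    ∃ f : G.E → α, (∀ e : (G.contractTriangle u v w t₁ t₂ t₃ huv huw).E, f e.val = g e) ∧
      f t₁ = k₁ ∧ f t₂ = k₂ ∧ f t₃ = k₃ := by
  have h₂₁ : t₂ ≠ t₁ := hT.edge_ne.symm
  have h₃₂ : t₃ ≠ t₂ := hT.rotate.edge_ne.symm
  have h₃₁ : t₃ ≠ t₁ := hT.rotate.rotate.edge_ne
  let k : G.E → α := fun e => if e = t₁ then k₁ else if e = t₂ then k₂ else k₃
  let f : G.E → α := Function.extend Subtype.val g k
  have hfk (e : G.E) (he : ¬ (e ≠ t₁ ∧ e ≠ t₂ ∧ e ≠ t₃)) : f e = k e :=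
    Function.extend_apply' _ _ _ fun ⟨e', he'⟩ => he (he' ▸ e'.2)
  refine ⟨f, Subtype.val_injective.extend_apply g k, ?_, ?_, ?_⟩
  · rw [hfk t₁ (by simp)]
    simp [k]
  · rw [hfk t₂ (by simp)]
    simp [k, h₂₁]
  · rw [hfk t₃ (by simp)]
    simp [k, h₃₁, h₃₂]

theorem IsTriangle.exists_extension_image_star_eq {α : Type*} [DecidableEq α]
    (hT : G.IsTriangle t₁ t₂ t₃ u v w)
    (hu : G.degree u = 3) (hv : G.degree v = 3) (hw : G.degree w = 3)
    (g : (G.contractTriangle u v w t₁ t₂ t₃ huv huw).E → α) :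
    ∃ f : G.E → α,
      (∀ e : (G.contractTriangle u v w t₁ t₂ t₃ huv huw).E, f e.val = g e) ∧
      (∀ x : (G.contractTriangle u v w t₁ t₂ t₃ huv huw).V, x ≠ contractedVertex →
        (G.star x.val).image f =
          ((G.contractTriangle u v w t₁ t₂ t₃ huv huw).star x).image g) ∧
      ∀ x ∈ ({u, v, w} : Finset G.V), (G.star x).image f =
        ((G.contractTriangle u v w t₁ t₂ t₃ huv huw).star contractedVertex).image g := by
  obtain ⟨a, b, c, hstar_u, hstar_v, hstar_w⟩ := hT.exists_stars_eq hu hv hw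
  obtain ⟨f, hf, hf₁, hf₂, hf₃⟩ := hT.exists_extension g (g c) (g a) (g b)
  refine ⟨f, hf, fun x hx => ?_, ?_⟩
  · rw [← hT.image_val_star_contractTriangle_of_ne hx, Finset.image_image]
    exact Finset.image_congr fun e _ => hf e
  · have rotate_triple (i j k : α) : ({j, k, i} : Finset α) = {i, j, k} := by
      rw [Finset.pair_comm k i, Finset.insert_comm]
    simp only [Finset.forall_mem_insert, Finset.mem_singleton, forall_eq, hstar_u, hstar_v, hstar_w,
      star_contractedVertex hstar_u hstar_v hstar_w, Finset.image_insert,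
      Finset.image_singleton, hf, hf₁, hf₂, hf₃]
    exact ⟨trivial, rotate_triple _ _ _, (rotate_triple _ _ _).symm⟩

end Contraction

end Multigraph

theorem extend_over_contractible_triangle_general (G H : Multigraph)
    (u v w : G.V) (t₁ t₂ t₃ : G.E) (huv : u ≠ v) (huw : u ≠ w)
    (hT : G.IsTriangle t₁ t₂ t₃ u v w)
    (hu : G.degree u = 3) (hv : G.degree v = 3) (hw : G.degree w = 3)
    (g : (G.contractTriangle u v w t₁ t₂ t₃ huv huw).E → H.E) (s : H.V)
    (hs : ((G.contractTriangle u v w t₁ t₂ t₃ huv huw).star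
        Multigraph.contractedVertex).image g = H.star s) :
    ∃ f : G.E → H.E,
      (∀ e : (G.contractTriangle u v w t₁ t₂ t₃ huv huw).E, f e.val = g e) ∧
      (∀ x : (G.contractTriangle u v w t₁ t₂ t₃ huv huw).V,
        x ∈ Multigraph.colVerts (G.contractTriangle u v w t₁ t₂ t₃ huv huw) H g →
        x ≠ Multigraph.contractedVertex → x.val ∈ Multigraph.colVerts G H f) ∧
      u ∈ Multigraph.colVerts G H f ∧
      v ∈ Multigraph.colVerts G H f ∧
      w ∈ Multigraph.colVerts G H f ∧
      f t₁ ∈ H.star s ∧ f t₂ ∈ H.star s ∧ f t₃ ∈ H.star s := by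
  obtain ⟨f, hfg, hf, hfT⟩ := hT.exists_extension_image_star_eq hu hv hw g
  simp only [Finset.forall_mem_insert, Finset.mem_singleton, forall_eq, hs] at hfT
  obtain ⟨hfu, hfv, hfw⟩ := hfT
  obtain ⟨-, -, -, h₁, h₂, h₃⟩ := hT
  refine ⟨f, hfg, fun x ⟨y, hy⟩ hx => ⟨y, (hf x hx).trans hy⟩, ⟨s, hfu⟩, ⟨s, hfv⟩, ⟨s, hfw⟩,
    ?_, ?_, ?_⟩
  · exact hfu ▸ Finset.mem_image_of_mem f (Multigraph.mem_star.2 (by simp [h₁]))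
  · exact hfv ▸ Finset.mem_image_of_mem f (Multigraph.mem_star.2 (by simp [h₂]))
  · exact hfw ▸ Finset.mem_image_of_mem f (Multigraph.mem_star.2 (by simp [h₃]))

/-- extending a map g on G/T with v_T ∈ V(g) over a contractible
triangle T, by coloring the edges of T with colors from ∂_S(s). -/
theorem extend_over_contractible_triangle (G : Multigraph) (hG : G.Cubic)
    (u v w : G.V) (t₁ t₂ t₃ : G.E) (huv : u ≠ v) (huw : u ≠ w)
    (hT : G.IsTriangle t₁ t₂ t₃ u v w)
    (hcontr : (G.contractTriangle u v w t₁ t₂ t₃ huv huw).Loopless)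
    (g : (G.contractTriangle u v w t₁ t₂ t₃ huv huw).E → SylvesterS.E)
    (s : SylvesterS.V)
    (hs : ((G.contractTriangle u v w t₁ t₂ t₃ huv huw).star
        (⟨u, huv, huw⟩ : (G.contractTriangle u v w t₁ t₂ t₃ huv huw).V)).image g
      = SylvesterS.star s) :
    ∃ f : G.E → SylvesterS.E,
      (∀ e : (G.contractTriangle u v w t₁ t₂ t₃ huv huw).E, f e.val = g e) ∧
      (∀ x : (G.contractTriangle u v w t₁ t₂ t₃ huv huw).V,
        x ∈ Multigraph.colVerts (G.contractTriangle u v w t₁ t₂ t₃ huv huw)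
              SylvesterS g →
        x ≠ (⟨u, huv, huw⟩ : (G.contractTriangle u v w t₁ t₂ t₃ huv huw).V) →
        x.val ∈ Multigraph.colVerts G SylvesterS f) ∧
      u ∈ Multigraph.colVerts G SylvesterS f ∧
      v ∈ Multigraph.colVerts G SylvesterS f ∧
      w ∈ Multigraph.colVerts G SylvesterS f ∧
      f t₁ ∈ SylvesterS.star s ∧ f t₂ ∈ SylvesterS.star s ∧
      f t₃ ∈ SylvesterS.star s :=
  extend_over_contractible_triangle_general G SylvesterS u v w t₁ t₂ t₃ huv huw hT
    (hG.2 u) (hG.2 v) (hG.2 w) g s hs
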